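/- Let 0 < σ < 1, let θ be a nonzero real number, and let r < s be real numbers. Then (1/Γ(σ)) ∫_r^s (s−λ)^{σ−1} E_σ(θ (λ−r)^σ) dλ = (1/θ) ( E_σ(θ (s−r)^σ) − 1 ). -/

import Mathlib

/-- The Mittag-Leffler function `E_σ(t) = Σ_{b ≥ 0} t^b / Γ(bσ + 1)`. -/
noncomputable def mittagLeffler (σ t : ℝ) : ℝ :=
  ∑' b : ℕ, t ^ b / Real.Gamma (b * σ + 1)

/-!
The Riemann–Liouville integral of order `ν` sends `(t - a) ^ (β - 1) / Γ(β)` to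
`(t - a) ^ (β + ν - 1) / Γ(β + ν)`: this is Euler's beta integral. Integrating the series of
`(t - a) ^ (β - 1) * E_{α,β}(θ (t - a) ^ α)` term by term therefore replaces `β` by `β + ν`. For
`β = 1` and `ν = α = σ` the result involves `E_{σ,σ+1}`, which is `E_σ` with its constant term
removed and its index shifted by one.
-/

open Asymptotics Filter MeasureTheory Set
open Real (Gamma Gamma_pos_of_pos)

theorem rpow_mul_exp_neg_le_Gamma_add_one {A x : ℝ} (hA : 0 ≤ A) (hx : 0 ≤ x) :
    A ^ x * Real.exp (-A) ≤ Gamma (x + 1) := by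
  have hint : IntegrableOn (fun t : ℝ ↦ Real.exp (-t) * t ^ (x + 1 - 1)) (Ioi 0) :=
    Real.GammaIntegral_convergent (by linarith)
  have hsub : Ioi A ⊆ Ioi (0 : ℝ) := Ioi_subset_Ioi hA
  rw [Real.Gamma_eq_integral (by linarith), ← integral_exp_neg_Ioi, ← integral_const_mul]
  calc ∫ t in Ioi A, A ^ x * Real.exp (-t)
      ≤ ∫ t in Ioi A, Real.exp (-t) * t ^ (x + 1 - 1) := by
        refine setIntegral_mono_on ((integrableOn_exp_neg_Ioi A).const_mul _)
          (hint.mono_set hsub) measurableSet_Ioi fun t (ht : A < t) ↦ ?_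
        rw [mul_comm, add_sub_cancel_right]
        gcongr
    _ ≤ ∫ t in Ioi 0, Real.exp (-t) * t ^ (x + 1 - 1) := by
        refine setIntegral_mono_set hint ?_ hsub.eventuallyLE
        filter_upwards [ae_restrict_mem measurableSet_Ioi] with t (ht : 0 < t)
        positivity

theorem rpow_isBigO_Gamma {A : ℝ} (hA : 0 < A) : (fun x ↦ A ^ x) =O[atTop] Gamma := by
  refine .of_bound (A * Real.exp A) ?_
  filter_upwards [eventually_ge_atTop 1] with x hx
  have hΓ : A ^ (x - 1) * Real.exp (-A) ≤ Gamma x := by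
    simpa using rpow_mul_exp_neg_le_Gamma_add_one hA.le (sub_nonneg.2 hx)
  rw [Real.norm_of_nonneg (by positivity),
    Real.norm_of_nonneg (Gamma_pos_of_pos (by linarith)).le]
  calc A ^ x = A * Real.exp A * (A ^ (x - 1) * Real.exp (-A)) := by
        rw [Real.rpow_sub_one hA.ne', Real.exp_neg]
        field_simp
    _ ≤ A * Real.exp A * Gamma x := by gcongr

/-- The two-parameter Mittag-Leffler function `E_{α,β}(t) = Σ_{b ≥ 0} t ^ b / Γ(bα + β)`. The
parameter `β` records the order of integration. At a pole of `Γ` the term is `0`, which agrees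
with the entire function `1 / Γ`. -/
noncomputable def mittagLefflerTwo (α β t : ℝ) : ℝ :=
  ∑' b : ℕ, t ^ b / Gamma (b * α + β)

theorem mittagLefflerTwo_one_right (α t : ℝ) : mittagLefflerTwo α 1 t = mittagLeffler α t :=
  rfl

theorem summable_mittagLefflerTwo {α : ℝ} (hα : 0 < α) (β t : ℝ) :
    Summable fun b : ℕ ↦ t ^ b / Gamma (b * α + β) := by
  set M : ℝ := |t| + 1
  have hM : 0 < M := by positivity
  set A : ℝ := M ^ α⁻¹
  have hA : 0 < A := by positivity
  have hApow (b : ℕ) : A ^ (b * α + β) = M ^ b * A ^ β := by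
    rw [Real.rpow_add hA, mul_comm (b : ℝ), Real.rpow_mul_natCast hA.le,
      Real.rpow_inv_rpow hM.le hα.ne']
  have harg : Tendsto (fun b : ℕ ↦ b * α + β) atTop atTop :=
    tendsto_atTop_add_const_right _ _ (tendsto_natCast_atTop_atTop.atTop_mul_const hα)
  have hΓinv : (fun b : ℕ ↦ (Gamma (b * α + β))⁻¹) =O[atTop] fun b ↦ (A ^ (b * α + β))⁻¹ :=
    ((rpow_isBigO_Gamma hA).comp_tendsto harg).inv_rev <|
      .of_forall fun b h ↦ absurd h (Real.rpow_pos_of_pos hA _).ne'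
  have hratio : ‖t / M‖ < 1 := by
    rw [norm_div, Real.norm_eq_abs, Real.norm_of_nonneg hM.le, div_lt_one hM]
    exact lt_add_one _
  refine summable_of_isBigO_nat
    ((summable_geometric_of_norm_lt_one hratio).mul_left (A ^ β)⁻¹) ?_
  refine ((isBigO_refl (fun b : ℕ ↦ t ^ b) atTop).mul hΓinv).congr_right fun b ↦ ?_
  rw [hApow, div_pow]
  field_simp

theorem mittagLefflerTwo_eq_inv_Gamma_add_mul {α : ℝ} (hα : 0 < α) (β t : ℝ) :
    mittagLefflerTwo α β t = (Gamma β)⁻¹ + t * mittagLefflerTwo α (β + α) t := by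
  rw [mittagLefflerTwo, (summable_mittagLefflerTwo hα β t).tsum_eq_zero_add, mittagLefflerTwo,
    ← tsum_mul_left]
  congr 1
  · simp
  · refine tsum_congr fun b ↦ ?_
    rw [show ((b + 1 : ℕ) : ℝ) * α + β = b * α + (β + α) by push_cast; ring]
    ring

theorem rpow_sub_one_mul_mul_rpow_pow {y : ℝ} (hy : 0 < y) (α β c : ℝ) (b : ℕ) :
    y ^ (β - 1) * (c * y ^ α) ^ b = c ^ b * y ^ (b * α + β - 1) := by
  rw [mul_pow, mul_left_comm, ← Real.rpow_mul_natCast hy.le, ← Real.rpow_add hy]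
  ring_nf

section BetaIntegral

variable {u v a x : ℝ}

theorem integral_sub_rpow_mul_sub_rpow (hu : 0 < u) (hv : 0 < v) (hax : a < x) :
    ∫ t in a..x, (x - t) ^ (v - 1) * (t - a) ^ (u - 1) =
      (x - a) ^ (u + v - 1) * (Gamma u * Gamma v / Gamma (u + v)) := by
  have hlen : 0 < x - a := sub_pos.2 hax
  have hshift := intervalIntegral.integral_comp_sub_right (a := a) (b := x)
    (fun y : ℝ ↦ (x - a - y) ^ (v - 1) * y ^ (u - 1)) a
  simp only [sub_sub_sub_cancel_right, sub_self] at hshift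
  have hbeta := Complex.betaIntegral_scaled u v hlen
  rw [Complex.betaIntegral_eq_Gamma_mul_div _ _ (by simpa) (by simpa)] at hbeta
  rw [hshift]
  apply Complex.ofReal_injective
  rw [← intervalIntegral.integral_ofReal]
  push_cast [Complex.ofReal_cpow hlen.le, ← Complex.Gamma_ofReal] at hbeta ⊢
  rw [← hbeta]
  refine intervalIntegral.integral_congr fun y hy ↦ ?_
  rw [uIcc_of_le hlen.le] at hy
  push_cast [Complex.ofReal_cpow hy.1, Complex.ofReal_cpow (sub_nonneg.2 hy.2)]
  exact mul_comm _ _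

theorem intervalIntegrable_sub_rpow_mul_sub_rpow (hu : 0 < u) (hv : 0 < v) (hax : a < x) :
    IntervalIntegrable (fun t ↦ (x - t) ^ (v - 1) * (t - a) ^ (u - 1)) volume a x := by
  refine intervalIntegral.intervalIntegrable_of_integral_ne_zero (ne_of_gt ?_)
  rw [integral_sub_rpow_mul_sub_rpow hu hv hax]
  exact mul_pos (Real.rpow_pos_of_pos (sub_pos.2 hax) _) (by positivity)

end BetaIntegral

/-- The Riemann–Liouville fractional integral of order `ν` with base point `a`, usually written
`(I_{a+}^ν f)(x)`. It is meant for `0 < ν` and `a ≤ x`. -/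
noncomputable def riemannLiouvilleIntegral (ν a : ℝ) (f : ℝ → ℝ) (x : ℝ) : ℝ :=
  1 / Gamma ν * ∫ t in a..x, (x - t) ^ (ν - 1) * f t

namespace riemannLiouvilleIntegral

variable {ν a x : ℝ}

theorem const_mul (c : ℝ) (f : ℝ → ℝ) :
    riemannLiouvilleIntegral ν a (fun t ↦ c * f t) x = c * riemannLiouvilleIntegral ν a f x := by
  simp only [riemannLiouvilleIntegral, mul_left_comm _ c, intervalIntegral.integral_const_mul]

theorem congr {f g : ℝ → ℝ} (hax : a ≤ x) (hfg : EqOn f g (Ioc a x)) :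
    riemannLiouvilleIntegral ν a f x = riemannLiouvilleIntegral ν a g x := by
  rw [riemannLiouvilleIntegral, riemannLiouvilleIntegral]
  congr 1
  refine intervalIntegral.integral_congr_ae (.of_forall fun t ht ↦ ?_)
  rw [uIoc_of_le hax] at ht
  simp only [hfg ht]

theorem sub_rpow {β : ℝ} (hν : 0 < ν) (hβ : 0 < β) (hax : a < x) :
    riemannLiouvilleIntegral ν a (fun t ↦ (t - a) ^ (β - 1)) x =
      Gamma β / Gamma (β + ν) * (x - a) ^ (β + ν - 1) := by
  have hΓν := (Gamma_pos_of_pos hν).ne'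
  rw [riemannLiouvilleIntegral, integral_sub_rpow_mul_sub_rpow hβ hν hax]
  field_simp

theorem hasSum_of_summable_abs {ι : Type*} [Countable ι] {f : ι → ℝ → ℝ} (hν : 0 < ν)
    (hax : a ≤ x)
    (hint : ∀ i, IntervalIntegrable (fun t ↦ (x - t) ^ (ν - 1) * f i t) volume a x)
    (hsum : Summable fun i ↦ riemannLiouvilleIntegral ν a (fun t ↦ |f i t|) x) :
    HasSum (fun i ↦ riemannLiouvilleIntegral ν a (f i) x)
      (riemannLiouvilleIntegral ν a (fun t ↦ ∑' i, f i t) x) := by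
  have hnorm (i : ι) : ∫ t in Ioc a x, ‖(x - t) ^ (ν - 1) * f i t‖ =
      Gamma ν * riemannLiouvilleIntegral ν a (fun t ↦ |f i t|) x := by
    rw [riemannLiouvilleIntegral, ← mul_assoc, mul_one_div_cancel (Gamma_pos_of_pos hν).ne',
      one_mul, intervalIntegral.integral_of_le hax]
    refine setIntegral_congr_fun measurableSet_Ioc fun t ht ↦ ?_
    simp only [norm_mul, Real.norm_eq_abs,
      abs_of_nonneg (Real.rpow_nonneg (sub_nonneg.2 ht.2) _)]
  simp only [riemannLiouvilleIntegral, ← tsum_mul_left, intervalIntegral.integral_of_le hax]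
  refine (hasSum_integral_of_summable_integral_norm (fun i ↦ (hint i).1) ?_).mul_left _
  simpa only [hnorm] using hsum.mul_left (Gamma ν)

theorem const_mul_sub_rpow_div_Gamma {α β : ℝ} (c : ℝ) (b : ℕ) (hα : 0 < α) (hβ : 0 < β)
    (hν : 0 < ν) (hax : a < x) :
    riemannLiouvilleIntegral ν a
        (fun t ↦ c ^ b / Gamma (b * α + β) * (t - a) ^ (b * α + β - 1)) x =
      (x - a) ^ (β + ν - 1) * ((c * (x - a) ^ α) ^ b / Gamma (b * α + (β + ν))) := by
  have hexp : 0 < b * α + β := by positivity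
  have hΓ := (Gamma_pos_of_pos hexp).ne'
  rw [const_mul, sub_rpow hν hexp hax, ← mul_div_assoc,
    rpow_sub_one_mul_mul_rpow_pow (sub_pos.2 hax), add_assoc]
  field_simp

theorem sub_rpow_mul_mittagLefflerTwo {α β : ℝ} (θ : ℝ) (hα : 0 < α) (hβ : 0 < β) (hν : 0 < ν)
    (hax : a < x) :
    riemannLiouvilleIntegral ν a
        (fun t ↦ (t - a) ^ (β - 1) * mittagLefflerTwo α β (θ * (t - a) ^ α)) x =
      (x - a) ^ (β + ν - 1) * mittagLefflerTwo α (β + ν) (θ * (x - a) ^ α) := by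
  set f : ℕ → ℝ → ℝ := fun b t ↦ θ ^ b / Gamma (b * α + β) * (t - a) ^ (b * α + β - 1)
  have hexp (b : ℕ) : 0 < b * α + β := by positivity
  have hint (b : ℕ) : IntervalIntegrable (fun t ↦ (x - t) ^ (ν - 1) * f b t) volume a x := by
    simpa only [f, mul_left_comm] using
      (intervalIntegrable_sub_rpow_mul_sub_rpow (hexp b) hν hax).const_mul
        (θ ^ b / Gamma (b * α + β))
  have habs (b : ℕ) : riemannLiouvilleIntegral ν a (fun t ↦ |f b t|) x =
      (x - a) ^ (β + ν - 1) * ((|θ| * (x - a) ^ α) ^ b / Gamma (b * α + (β + ν))) := by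
    rw [← const_mul_sub_rpow_div_Gamma _ _ hα hβ hν hax]
    refine congr hax.le fun t ht ↦ ?_
    simp only [f, abs_mul, abs_div, abs_pow, abs_of_pos (Gamma_pos_of_pos (hexp b)),
      abs_of_pos (Real.rpow_pos_of_pos (sub_pos.2 ht.1) _)]
  have hsum : Summable fun b ↦ riemannLiouvilleIntegral ν a (fun t ↦ |f b t|) x := by
    simpa only [habs] using (summable_mittagLefflerTwo hα _ _).mul_left _
  calc _ = riemannLiouvilleIntegral ν a (fun t ↦ ∑' b, f b t) x := by
        refine congr hax.le fun t ht ↦ ?_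
        simp only [f, mittagLefflerTwo, ← tsum_mul_left, ← mul_div_assoc, div_mul_eq_mul_div,
          rpow_sub_one_mul_mul_rpow_pow (sub_pos.2 ht.1)]
    _ = ∑' b, riemannLiouvilleIntegral ν a (f b) x :=
        (hasSum_of_summable_abs hν hax.le hint hsum).tsum_eq.symm
    _ = _ := by
        simp only [f, const_mul_sub_rpow_div_Gamma _ _ hα hβ hν hax, tsum_mul_left,
          mittagLefflerTwo]

end riemannLiouvilleIntegral

theorem mittagLeffler_fractional_integral_general (σ θ r s : ℝ) (hσ : 0 < σ) (hθ : θ ≠ 0)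
    (hrs : r < s) :
    (1 / Gamma σ) * ∫ l in r..s, (s - l) ^ (σ - 1) * mittagLeffler σ (θ * (l - r) ^ σ) =
      (1 / θ) * (mittagLeffler σ (θ * (s - r) ^ σ) - 1) := by
  have hint := riemannLiouvilleIntegral.sub_rpow_mul_mittagLefflerTwo θ hσ one_pos hσ hrs
  have hrec := mittagLefflerTwo_eq_inv_Gamma_add_mul hσ 1 (θ * (s - r) ^ σ)
  simp only [sub_self, Real.rpow_zero, one_mul, add_sub_cancel_left, Real.Gamma_one, inv_one,
    mittagLefflerTwo_one_right] at hint hrec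
  calc _ = (s - r) ^ σ * mittagLefflerTwo σ (1 + σ) (θ * (s - r) ^ σ) := hint
    _ = _ := by
      rw [hrec]
      field_simp
      ring

/-- For `0 < σ < 1`, `θ ≠ 0` and `r < s`, one has
`(1/Γ(σ)) ∫_r^s (s−λ)^{σ−1} E_σ(θ (λ−r)^σ) dλ = (1/θ)(E_σ(θ (s−r)^σ) − 1)`. -/
theorem mittagLeffler_fractional_integral (σ θ r s : ℝ) (hσ0 : 0 < σ) (hσ1 : σ < 1)
    (hθ : θ ≠ 0) (hrs : r < s) :
    (1 / Real.Gamma σ) *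
        ∫ l in r..s, (s - l) ^ (σ - 1) * mittagLeffler σ (θ * (l - r) ^ σ) =
      (1 / θ) * (mittagLeffler σ (θ * (s - r) ^ σ) - 1) :=
  mittagLeffler_fractional_integral_general σ θ r s hσ0 hθ hrs
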